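/- There exists a constant c > 0 (depending only on ξ and the sequence (x_k)) such that for every polynomial R ∈ ℤ[T] of degree at most 5 and every integer k ≥ 1: the limit δ_k(R(ξ)) := lim_{i→∞} {x_{k+6i,0}·R(ξ)} exists; |δ_k(R(ξ)) − {x_{k,0}·R(ξ)}| ≤ c·‖R‖/X_k; δ_{k+6}(R(ξ)) = δ_k(R(ξ)); and if deg(R) ≤ 3 then also δ_{k+3}(R(ξ)) = δ_k(R(ξ)). -/

import Mathlib

open Polynomial Filter

noncomputable def gold : ℝ := (1 + Real.sqrt 5) / 2

def Mmat (k : ℕ) : Matrix (Fin 2) (Fin 2) ℤ := !![3, (-1)^k; (-1)^(k+1), 0]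

noncomputable def Xnorm (x : ℕ → Matrix (Fin 2) (Fin 2) ℤ) (k : ℕ) : ℝ :=
  max |(x k 0 0 : ℝ)| (max |(x k 0 1 : ℝ)| |(x k 1 1 : ℝ)|)

def MarkoffSeq (ξ : ℝ) (x : ℕ → Matrix (Fin 2) (Fin 2) ℤ) : Prop :=
  (∀ k, 1 ≤ k → x k 0 1 = x k 1 0) ∧
  (∀ k, 1 ≤ k → (x k).det = 1) ∧
  ∃ c₁ c₂ c₃ : ℝ, 0 < c₁ ∧ 0 < c₂ ∧ 0 < c₃ ∧ ∀ k, 1 ≤ k →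
    (c₁ * Xnorm x k ^ gold ≤ Xnorm x (k+1) ∧ Xnorm x (k+1) ≤ c₂ * Xnorm x k ^ gold) ∧
    (|(x k 0 0 : ℝ) * ξ - (x k 0 1 : ℝ)| ≤ c₃ / Xnorm x k ∧
     |(x k 0 1 : ℝ) * ξ - (x k 1 1 : ℝ)| ≤ c₃ / Xnorm x k) ∧
    (x (k+2) = x (k+1) * Mmat (k+1) * x k ∧ x (k+2) = x k * Mmat k * x (k+1)) ∧
    (Xnorm x k < Xnorm x (k+1) ∧ Xnorm x k < (1 + ξ^2) * |(x k 0 0 : ℝ)|)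

def polyNorm (P : Polynomial ℤ) : ℕ := P.support.sup fun i => (P.coeff i).natAbs

noncomputable def distInt (η : ℝ) : ℝ := |η - round η|

noncomputable def ratHeight (α : ℚ) : ℝ := max |(α.num : ℝ)| (α.den : ℝ)

def IsMinIntPoly (α : ℂ) (P : Polynomial ℤ) : Prop :=
  P ≠ 0 ∧ Polynomial.aeval α P = 0 ∧ P.content = 1 ∧ 0 < P.leadingCoeff ∧
  ∀ Q : Polynomial ℤ, Q ≠ 0 → Polynomial.aeval α Q = 0 → P.degree ≤ Q.degree

noncomputable def Qpoly (x : ℕ → Matrix (Fin 2) (Fin 2) ℤ) (k : ℕ) : Polynomial ℤ :=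
  Polynomial.C (x k 0 1 * x (k+1) 1 1 - x k 1 1 * x (k+1) 0 1)
  - Polynomial.C (x k 0 0 * x (k+1) 1 1 - x k 1 1 * x (k+1) 0 0) * Polynomial.X
  + Polynomial.C (x k 0 0 * x (k+1) 0 1 - x k 0 1 * x (k+1) 0 0) * Polynomial.X ^ 2

/-!
Let `y k` be the upper left entries of the matrices. All arithmetic is done modulo `ℤ` and up to
`O(1 / y k)`. Since `x k` is symmetric and unimodular, `y k * ξ` and `y k * ξ ^ 2` are integers at
this precision, and multiplying two or three such approximations shows that `ξ ^ 3`, `ξ ^ 4` and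
`ξ ^ 5` times products of denominators are integers up to explicit terms of lower degree. Those
products are what appears in the Markoff relations `y (k + 3) + y k = 3 y (k + 1) y (k + 2)` and
`y (k + 6) - y k = 9 y (k + 3) (y (k + 4) ^ 2 - y (k + 2) ^ 2)`, and the terms of lower degree
cancel. Hence `(y (k + 6) - y k) * ξ ^ j` for `j ≤ 5` and `(y (k + 3) + y k) * ξ ^ j` for `j ≤ 3`
are within `O(1 / y k)` of integers. The denominators grow so fast that the errors along
`k, k + 6, k + 12, …` sum to `O(1 / y k)`, and the sign in `y (k + 3) + y k` is harmless because
the distance to the nearest integer is even.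
-/

open Asymptotics

/-! ### Congruences modulo `ℤ` up to a small error -/

section DistInt

theorem distInt_eq_norm (η : ℝ) : distInt η = ‖(η : UnitAddCircle)‖ :=
  UnitAddCircle.norm_eq.symm

theorem abs_distInt_sub_distInt_le_sub (a b : ℝ) : |distInt a - distInt b| ≤ distInt (a - b) := by
  simpa only [distInt_eq_norm, AddCircle.coe_sub] using abs_norm_sub_norm_le _ _

theorem abs_distInt_sub_distInt_le_add (a b : ℝ) : |distInt a - distInt b| ≤ distInt (a + b) := by
  simpa only [distInt_eq_norm, AddCircle.coe_add, norm_neg, sub_neg_eq_add]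
    using abs_norm_sub_norm_le (a : UnitAddCircle) (-b)

theorem abs_coeff_le_polyNorm (R : ℤ[X]) (j : ℕ) : |R.coeff j| ≤ polyNorm R := by
  by_cases hj : j ∈ R.support
  · rw [Int.abs_eq_natAbs]
    exact_mod_cast Finset.le_sup (f := fun i => (R.coeff i).natAbs) hj
  · rw [notMem_support_iff.mp hj, abs_zero]
    positivity

end DistInt

theorem isTheta_comp_tendsto {ι κ : Type*} {l : Filter ι} {l' : Filter κ} {f₁ f₂ : ι → ℝ}
    {g : κ → ι} (h : f₁ =Θ[l] f₂) (hg : Tendsto g l' l) : (f₁ ∘ g) =Θ[l'] (f₂ ∘ g) :=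
  ⟨h.1.comp_tendsto hg, h.2.comp_tendsto hg⟩

theorem isBigO_neg_one_pow_mul {ι : Type*} {l : Filter ι} {f w : ι → ℝ} (n : ι → ℕ)
    (hf : f =O[l] w) : (fun i => (-1) ^ n i * f i) =O[l] w :=
  (isBigO_of_le l fun i => by simp).trans hf

section NearInt

variable {ι : Type*} {l : Filter ι} {w : ι → ℝ}

/-- The families of reals whose distance to `ℤ` is `O(w)` along `l`. Membership of `f - g` is
congruence modulo `ℤ` up to an error `O(w)`. -/
def nearInt (l : Filter ι) (w : ι → ℝ) : AddSubgroup (ι → ℝ) where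
  carrier := {f | (fun i => (f i : UnitAddCircle)) =O[l] w}
  zero_mem' := isBigO_zero w l
  add_mem' hf hg := hf.add hg
  neg_mem' hf := hf.neg_left

theorem mem_nearInt_iff {f : ι → ℝ} :
    f ∈ nearInt l w ↔ (fun i => (f i : UnitAddCircle)) =O[l] w :=
  Iff.rfl

theorem intCast_mem_nearInt (n : ι → ℤ) : (fun i => (n i : ℝ)) ∈ nearInt l w := by
  have coe_eq_zero (i : ι) : ((n i : ℝ) : UnitAddCircle) = 0 :=
    (AddCircle.coe_eq_zero_iff 1).mpr ⟨n i, by simp⟩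
  simpa only [mem_nearInt_iff, coe_eq_zero] using isBigO_zero w l

theorem mem_nearInt_of_isBigO {f : ι → ℝ} (hf : f =O[l] w) : f ∈ nearInt l w := by
  have norm_le (i : ι) : ‖(f i : UnitAddCircle)‖ ≤ ‖f i‖ := by
    simpa [UnitAddCircle.norm_eq] using round_le (f i) 0
  exact (isBigO_of_le l norm_le).trans hf

theorem mem_nearInt_congr {f g : ι → ℝ} (hf : f ∈ nearInt l w) (h : ∀ i, g i = f i) :
    g ∈ nearInt l w :=
  funext h ▸ hf

theorem mem_nearInt_of_eq_intCast_add {f r : ι → ℝ} (n : ι → ℤ) (hr : r =O[l] w)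
    (h : ∀ i, f i = n i + r i) : f ∈ nearInt l w := by
  rw [show f = (fun i => (n i : ℝ)) + r from funext h]
  exact add_mem (intCast_mem_nearInt n) (mem_nearInt_of_isBigO hr)

theorem intCast_mul_mem_nearInt {f : ι → ℝ} {n : ι → ℤ}
    (hn : (fun i => (n i : ℝ)) =O[l] fun _ => (1 : ℝ)) (hf : f ∈ nearInt l w) :
    (fun i => n i * f i) ∈ nearInt l w := by
  have norm_le (i : ι) :
      ‖((n i * f i : ℝ) : UnitAddCircle)‖ ≤ ‖(n i : ℝ) * ‖(f i : UnitAddCircle)‖‖ := by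
    rw [← zsmul_eq_mul, AddCircle.coe_zsmul, norm_mul, norm_norm, Int.norm_cast_real]
    exact norm_zsmul_le (n i) _
  simpa only [mem_nearInt_iff, one_mul]
    using (isBigO_of_le l norm_le).trans (hn.mul (mem_nearInt_iff.mp hf).norm_left)

theorem neg_one_pow_mul_mem_nearInt {f : ι → ℝ} (n : ι → ℕ) (hf : f ∈ nearInt l w) :
    (fun i => (-1) ^ n i * f i) ∈ nearInt l w := by
  simpa using intCast_mul_mem_nearInt (n := fun i => (-1) ^ n i) (isBigO_of_le l (by simp)) hf

theorem comp_mem_nearInt {κ : Type*} {l' : Filter κ} {w' : κ → ℝ} {f : ι → ℝ} {g : κ → ι}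
    (hg : Tendsto g l' l) (hw : (w ∘ g) =O[l'] w') (hf : f ∈ nearInt l w) :
    f ∘ g ∈ nearInt l' w' :=
  ((mem_nearInt_iff.mp hf).comp_tendsto hg).trans hw

theorem exists_distInt_mul_aeval_le {ξ : ℝ} {d : ι → ℝ} {N : ℕ}
    (hd : ∀ j ≤ N, (fun i => d i * ξ ^ j) ∈ nearInt ⊤ w) :
    ∃ C, 0 ≤ C ∧ ∀ R : ℤ[X], R.natDegree ≤ N → ∀ i,
      distInt (d i * aeval ξ R) ≤ C * polyNorm R * |w i| := by
  have bound (j : Fin (N + 1)) : ∃ c, 0 ≤ c ∧ ∀ i, distInt (d i * ξ ^ (j : ℕ)) ≤ c * |w i| := by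
    obtain ⟨c, hc, h⟩ := (hd j (Nat.lt_succ_iff.mp j.2)).exists_nonneg
    exact ⟨c, hc, fun i => by simpa [distInt_eq_norm] using isBigOWith_top.mp h i⟩
  choose c hc hle using bound
  refine ⟨∑ j, c j, Finset.sum_nonneg fun j _ => hc j, fun R hR i => ?_⟩
  have expand : d i * aeval ξ R =
      ∑ j : Fin (N + 1), R.coeff (j : ℕ) • (d i * ξ ^ (j : ℕ)) := by
    rw [aeval_eq_sum_range' (Nat.lt_succ_of_le hR), Finset.sum_range, Finset.mul_sum]
    simp only [mul_smul_comm]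
  rw [expand, distInt_eq_norm, QuotientAddGroup.mk_sum, Finset.sum_mul, Finset.sum_mul]
  refine (norm_sum_le _ _).trans (Finset.sum_le_sum fun j _ => ?_)
  calc ‖((R.coeff j • (d i * ξ ^ (j : ℕ)) : ℝ) : UnitAddCircle)‖
      ≤ ‖R.coeff j‖ * ‖((d i * ξ ^ (j : ℕ) : ℝ) : UnitAddCircle)‖ := by
        rw [AddCircle.coe_zsmul]
        exact norm_zsmul_le _ _
    _ ≤ polyNorm R * (c j * |w i|) := by
        rw [← distInt_eq_norm, Int.norm_eq_abs, ← Int.cast_abs]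
        gcongr
        · exact abs_nonneg _
        · exact_mod_cast abs_coeff_le_polyNorm R j
        · exact hle j i
    _ = c j * polyNorm R * |w i| := by ring

end NearInt

/-! ### Products of unimodular approximations -/

/-- The error `y t - u` of the rational approximation `u / y` to `t`, scaled by the denominator. -/
def approxErr {ι : Type*} (t : ℝ) (y u : ι → ℤ) (i : ι) : ℝ :=
  y i * t - u i

/-- A family of symmetric integer matrices `!![y, u; u, v]` of determinant `1` with
`|y ξ - u| = O(1 / |y|)` along `l`, that is, approximations to `ξ` which are as good as convergents
and whose determinant makes `v / y` equally good for `ξ ^ 2`. -/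
structure UnimodularApprox {ι : Type*} (ξ : ℝ) (l : Filter ι) (y u v : ι → ℤ) : Prop where
  det_eq (i : ι) : y i * v i - u i ^ 2 = 1
  ne_zero (i : ι) : y i ≠ 0
  isBigO_err : approxErr ξ y u =O[l] fun i => (y i : ℝ)⁻¹

namespace UnimodularApprox

variable {ι : Type*} {ξ : ℝ} {l : Filter ι} {y u v z a b : ι → ℤ} {w : ι → ℝ}

theorem comp (h : UnimodularApprox ξ l y u v) {κ : Type*} {l' : Filter κ} {g : κ → ι}
    (hg : Tendsto g l' l) : UnimodularApprox ξ l' (y ∘ g) (u ∘ g) (v ∘ g) where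
  det_eq _ := h.det_eq _
  ne_zero _ := h.ne_zero _
  isBigO_err := h.isBigO_err.comp_tendsto hg

theorem cast_ne_zero (h : UnimodularApprox ξ l y u v) (i : ι) : (y i : ℝ) ≠ 0 :=
  mod_cast h.ne_zero i

theorem isBigO_inv_one (h : UnimodularApprox ξ l y u v) :
    (fun i => (y i : ℝ)⁻¹) =O[l] fun _ => (1 : ℝ) := by
  refine isBigO_of_le l fun i => ?_
  rw [norm_inv, norm_one, Real.norm_eq_abs]
  exact inv_le_one_of_one_le₀ (mod_cast Int.one_le_abs (h.ne_zero i))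

theorem cast_eq_div (h : UnimodularApprox ξ l y u v) (i : ι) :
    (v i : ℝ) = (1 + (u i : ℝ) ^ 2) / y i := by
  rw [eq_div_iff (h.cast_ne_zero i)]
  have := h.det_eq i
  exact_mod_cast (by linarith : v i * y i = 1 + u i ^ 2)

theorem approxErr_sq (h : UnimodularApprox ξ l y u v) (i : ι) :
    approxErr (ξ ^ 2) y v i = 2 * ξ * approxErr ξ y u i - (1 + approxErr ξ y u i ^ 2) / y i := by
  have := h.cast_ne_zero i
  rw [approxErr, approxErr, h.cast_eq_div]
  field_simp
  ring

theorem isBigO_err_one (h : UnimodularApprox ξ l y u v) :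
    approxErr ξ y u =O[l] fun _ => (1 : ℝ) :=
  h.isBigO_err.trans h.isBigO_inv_one

theorem isBigO_sqErr (h : UnimodularApprox ξ l y u v) :
    approxErr (ξ ^ 2) y v =O[l] fun i => (y i : ℝ)⁻¹ := by
  have he : (fun i => 1 + approxErr ξ y u i ^ 2) =O[l] fun _ => (1 : ℝ) := by
    simpa using (isBigO_refl _ l).add (h.isBigO_err_one.pow 2)
  refine IsBigO.congr_left ?_ fun i => (h.approxErr_sq i).symm
  refine (h.isBigO_err.const_mul_left (2 * ξ)).sub ?_
  simpa only [div_eq_mul_inv, one_mul] using he.mul (isBigO_refl (fun i => (y i : ℝ)⁻¹) l)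

theorem isBigO_one (h : UnimodularApprox ξ l y u v) :
    (fun _ => (1 : ℝ)) =O[l] fun i => (y i : ℝ) := by
  simpa using h.isBigO_inv_one.inv_rev (by simp [h.ne_zero])

theorem isBigO_mul_one (h : UnimodularApprox ξ l y u v) {r : ι → ℝ}
    (hr : r =O[l] fun i => (y i : ℝ)⁻¹) : (fun i => y i * r i) =O[l] fun _ => (1 : ℝ) := by
  simpa [h.cast_ne_zero] using (isBigO_refl (fun i => (y i : ℝ)) l).mul hr

theorem isBigO_sq_err_mul_div (h : UnimodularApprox ξ l y u v)
    (hzy : (fun i => (z i / y i ^ 3 : ℝ)) =O[l] w) :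
    (fun i => approxErr ξ y u i ^ 2 * (z i / y i)) =O[l] w := by
  refine (((h.isBigO_err.pow 2).mul (isBigO_refl _ l)).congr_right fun i => ?_).trans hzy
  have := h.cast_ne_zero i
  field_simp

theorem isBigO_of_isBigO_approxErr (h : UnimodularApprox ξ l y u v) {t : ℝ} {p : ι → ℤ}
    (hp : approxErr t y p =O[l] fun i => (y i : ℝ)⁻¹) :
    (fun i => (p i : ℝ)) =O[l] fun i => (y i : ℝ) := by
  have hyt : (fun i => y i * t) =O[l] fun i => (y i : ℝ) := by
    simpa only [mul_comm _ t] using (isBigO_refl _ l).const_mul_left t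
  exact (hyt.sub (hp.trans (h.isBigO_inv_one.trans h.isBigO_one))).congr_left
    fun i => sub_sub_cancel _ _

theorem mul_cube_sub_mem_nearInt (h : UnimodularApprox ξ l y u v)
    (h' : UnimodularApprox ξ l z a b) (hyz : (fun i => (y i / z i : ℝ)) =O[l] w)
    (hzy : (fun i => (z i / y i ^ 3 : ℝ)) =O[l] w) :
    (fun i => y i * z i * ξ ^ 3 - ξ * (z i / y i)) ∈ nearInt l w := by
  have hu : (fun i => u i * approxErr (ξ ^ 2) z b i) =O[l] w :=
    ((h.isBigO_of_isBigO_approxErr h.isBigO_err).mul h'.isBigO_sqErr).trans hyz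
  have hv : (fun i => v i * approxErr ξ z a i) =O[l] w :=
    ((h.isBigO_of_isBigO_approxErr h.isBigO_sqErr).mul h'.isBigO_err).trans hyz
  have he := h.isBigO_sq_err_mul_div hzy
  refine mem_nearInt_of_eq_intCast_add (fun i => 2 * u i * b i - v i * a i)
    (((he.const_mul_left ξ).add (hu.const_mul_left 2)).sub hv) fun i => ?_
  have hn := h.approxErr_sq i
  simp only [approxErr] at hn ⊢
  push_cast
  linear_combination -(z i * ξ) * hn

theorem mul_fourth_sub_mem_nearInt (h : UnimodularApprox ξ l y u v)
    (h' : UnimodularApprox ξ l z a b) (hyz : (fun i => (y i / z i : ℝ)) =O[l] w)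
    (hzy : (fun i => (z i / y i ^ 3 : ℝ)) =O[l] w) :
    (fun i => y i * z i * ξ ^ 4 -
      (2 * ξ ^ 3 * (approxErr ξ y u i * z i) - ξ ^ 2 * (z i / y i))) ∈ nearInt l w := by
  have hv : (fun i => v i * approxErr (ξ ^ 2) z b i) =O[l] w :=
    ((h.isBigO_of_isBigO_approxErr h.isBigO_sqErr).mul h'.isBigO_sqErr).trans hyz
  have he := h.isBigO_sq_err_mul_div hzy
  refine mem_nearInt_of_eq_intCast_add (fun i => v i * b i)
    (hv.sub (he.const_mul_left (ξ ^ 2))) fun i => ?_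
  have hn := h.approxErr_sq i
  simp only [approxErr] at hn ⊢
  push_cast
  linear_combination (z i * ξ ^ 2) * hn

/-- The integer approximations `u b ^ 2` and `v a b` of `y z ^ 2 ξ ^ 5` are mixed with weights `m`
and `1 - m`: taking `m = 2` or `m = -3` removes one of the two terms in `ξ ^ 4`. -/
theorem mul_sq_fifth_sub_eq (m : ℤ) (h : UnimodularApprox ξ l y u v)
    (h' : UnimodularApprox ξ l z a b) (i : ι) :
    y i * z i ^ 2 * ξ ^ 5 -
      ((2 - m) * ξ ^ 4 * (approxErr ξ y u i * z i ^ 2)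
        + (m - 1) * ξ ^ 3 * ((1 + approxErr ξ y u i ^ 2) * (z i ^ 2 / y i))
        + (3 + m) * ξ ^ 4 * (approxErr ξ z a i * z i * y i)
        - (1 + m) * ξ ^ 3 * y i) =
    (m * (u i * b i ^ 2) + (1 - m) * (v i * a i * b i) : ℤ)
      + (y i * (-(1 + m) * ξ ^ 3 * (approxErr ξ z a i * approxErr ξ z a i)
          - m * ξ * (approxErr (ξ ^ 2) z b i * approxErr (ξ ^ 2) z b i)
          - (1 - m) * ξ ^ 2 * (approxErr ξ z a i * approxErr (ξ ^ 2) z b i))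
        + approxErr ξ y u i * (m * (approxErr (ξ ^ 2) z b i * approxErr (ξ ^ 2) z b i)
          - 2 * m * ξ ^ 2 * (z i * approxErr (ξ ^ 2) z b i))
        + approxErr (ξ ^ 2) y v i * ((1 - m) * (approxErr ξ z a i * approxErr (ξ ^ 2) z b i
          - ξ ^ 2 * (z i * approxErr ξ z a i) - ξ * (z i * approxErr (ξ ^ 2) z b i)))) := by
  have hn := h.approxErr_sq i
  have hdet : (z i * b i - a i ^ 2 : ℝ) = 1 := mod_cast h'.det_eq i
  simp only [approxErr] at hn ⊢
  push_cast
  linear_combination (1 - m) * z i ^ 2 * ξ ^ 3 * hn - (1 + m) * y i * ξ ^ 3 * hdet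

theorem mul_sq_fifth_sub_mem_nearInt (m : ℤ) (h : UnimodularApprox ξ l y u v)
    (h' : UnimodularApprox ξ l z a b) (hyw : (fun i => (y i : ℝ)⁻¹) =O[l] w)
    (hyz : (fun i => (y i / z i ^ 2 : ℝ)) =O[l] w) :
    (fun i => y i * z i ^ 2 * ξ ^ 5 -
      ((2 - m) * ξ ^ 4 * (approxErr ξ y u i * z i ^ 2)
        + (m - 1) * ξ ^ 3 * ((1 + approxErr ξ y u i ^ 2) * (z i ^ 2 / y i))
        + (3 + m) * ξ ^ 4 * (approxErr ξ z a i * z i * y i)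
        - (1 + m) * ξ ^ 3 * y i)) ∈ nearInt l w := by
  set e := approxErr ξ y u
  set n := approxErr (ξ ^ 2) y v
  set e' := approxErr ξ z a
  set n' := approxErr (ξ ^ 2) z b
  have he' : e' =O[l] fun i => (z i : ℝ)⁻¹ := h'.isBigO_err
  have hn' : n' =O[l] fun i => (z i : ℝ)⁻¹ := h'.isBigO_sqErr
  have hn1 : n' =O[l] fun _ => (1 : ℝ) := hn'.trans h'.isBigO_inv_one
  have hze' : (fun i => z i * e' i) =O[l] fun _ => (1 : ℝ) := h'.isBigO_mul_one he'
  have hzn' : (fun i => z i * n' i) =O[l] fun _ => (1 : ℝ) := h'.isBigO_mul_one hn'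
  have hy : (fun i => y i * (-(1 + m) * ξ ^ 3 * (e' i * e' i) - m * ξ * (n' i * n' i)
      - (1 - m) * ξ ^ 2 * (e' i * n' i))) =O[l] w := by
    refine (((isBigO_refl (fun i => (y i : ℝ)) l).mul ((((he'.mul he').const_mul_left _).sub
      ((hn'.mul hn').const_mul_left _)).sub ((he'.mul hn').const_mul_left _))).congr_right
      fun i => ?_).trans hyz
    ring
  have he : (fun i => e i * (m * (n' i * n' i) - 2 * m * ξ ^ 2 * (z i * n' i))) =O[l] w := by
    have hfactor := (hn1.mul hn1).const_mul_left (m : ℝ)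
    simp only [mul_one] at hfactor
    simpa only [mul_one] using (h.isBigO_err.trans hyw).mul
      (hfactor.sub (hzn'.const_mul_left (2 * m * ξ ^ 2)))
  have hn : (fun i => n i * ((1 - m) * (e' i * n' i - ξ ^ 2 * (z i * e' i) - ξ * (z i * n' i))))
      =O[l] w := by
    have hfactor := h'.isBigO_err_one.mul hn1
    simp only [mul_one] at hfactor
    simpa only [mul_one] using (h.isBigO_sqErr.trans hyw).mul
      (((hfactor.sub (hze'.const_mul_left (ξ ^ 2))).sub (hzn'.const_mul_left ξ)).const_mul_left
        (1 - m : ℝ))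
  exact mem_nearInt_of_eq_intCast_add _ ((hy.add he).add hn) (h.mul_sq_fifth_sub_eq m h')

end UnimodularApprox

/-! ### Approximations along the Markoff recurrence -/

/-- Unimodular approximations to `ξ` in which consecutive denominators form the Markoff triples of
one branch of the Markoff tree, and consecutive fractions have the previous denominator, up to
sign, as cross determinant. -/
structure MarkoffApprox (ξ : ℝ) (y u v : ℕ → ℤ) : Prop extends UnimodularApprox ξ ⊤ y u v where
  add_eq (k : ℕ) : y (k + 3) + y k = 3 * y (k + 1) * y (k + 2)
  markoff (k : ℕ) : y k ^ 2 + y (k + 1) ^ 2 + y (k + 2) ^ 2 = 3 * y k * y (k + 1) * y (k + 2)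
  cross (k : ℕ) : y (k + 1) * u (k + 2) - u (k + 1) * y (k + 2) = (-1) ^ (k + 1) * y k
  isBigO_succ : (fun k => (y k : ℝ)) =O[⊤] fun k => (y (k + 1) : ℝ)

namespace MarkoffApprox

variable {ξ : ℝ} {y u v : ℕ → ℤ}

section Growth

theorem shift (h : MarkoffApprox ξ y u v) (j : ℕ) :
    UnimodularApprox ξ ⊤ (fun k => y (k + j)) (fun k => u (k + j)) (fun k => v (k + j)) :=
  h.comp (g := (· + j)) tendsto_top

theorem add_eq_cast (h : MarkoffApprox ξ y u v) (k : ℕ) :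
    (y (k + 3) + y k : ℝ) = 3 * y (k + 1) * y (k + 2) :=
  mod_cast h.add_eq k

theorem markoff_cast (h : MarkoffApprox ξ y u v) (k : ℕ) :
    (y k ^ 2 + y (k + 1) ^ 2 + y (k + 2) ^ 2 : ℝ) = 3 * y k * y (k + 1) * y (k + 2) :=
  mod_cast h.markoff k

theorem isBigO_mono (h : MarkoffApprox ξ y u v) {m n : ℕ} (hmn : m ≤ n) :
    (fun k => (y (k + m) : ℝ)) =O[⊤] fun k => (y (k + n) : ℝ) := by
  induction n, hmn using Nat.le_induction with
  | base => exact isBigO_refl _ _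
  | succ n _ ih => exact ih.trans (h.isBigO_succ.comp_tendsto (k := (· + n)) tendsto_top)

theorem isBigO_inv_shift (h : MarkoffApprox ξ y u v) (j : ℕ) :
    (fun k => (y (k + j) : ℝ)⁻¹) =O[⊤] fun k => (y k : ℝ)⁻¹ :=
  (h.isBigO_mono j.zero_le).inv_rev (by simp [h.ne_zero])

theorem isBigO_sq_div (h : MarkoffApprox ξ y u v) {m n : ℕ} (hmn : m ≤ n) :
    (fun k => (y (k + m) ^ 2 / y (k + n) : ℝ)) =O[⊤] fun k => (y (k + m) : ℝ) := by
  refine (((isBigO_refl (fun k => (y (k + m) : ℝ)) ⊤).mul (h.isBigO_mono hmn)).mul (isBigO_refl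
    (fun k => (y (k + n) : ℝ)⁻¹) ⊤)).congr (fun k => by ring) fun k => ?_
  exact mul_inv_cancel_right₀ (h.cast_ne_zero _) _

theorem isTheta_mul (h : MarkoffApprox ξ y u v) :
    (fun k => (y (k + 2) : ℝ)) =Θ[⊤] fun k => (y k * y (k + 1) : ℝ) := by
  have markoff (k : ℕ) : (y k ^ 2 / y (k + 2) + y (k + 1) ^ 2 / y (k + 2) : ℝ) + y (k + 2) =
      3 * (y k * y (k + 1)) := by
    have := h.cast_ne_zero (k + 2)
    field_simp
    linear_combination h.markoff_cast k
  have hq₀ := h.isBigO_sq_div zero_le_two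
  have hq₁ := h.isBigO_sq_div one_le_two
  constructor
  · have h₀ : (fun k => (y k : ℝ)) =O[⊤] fun k => (y k * y (k + 1) : ℝ) := by
      simpa only [mul_one] using (isBigO_refl _ ⊤).mul (h.shift 1).isBigO_one
    have h₁ : (fun k => (y (k + 1) : ℝ)) =O[⊤] fun k => (y k * y (k + 1) : ℝ) := by
      simpa only [one_mul] using h.isBigO_one.mul (isBigO_refl _ ⊤)
    exact (((isBigO_refl _ ⊤).const_mul_left 3).sub ((hq₀.trans h₀).add (hq₁.trans h₁))).congr_left
      fun k => by linear_combination -markoff k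
  · exact ((((hq₀.trans (h.isBigO_mono zero_le_two)).add (hq₁.trans (h.isBigO_mono one_le_two))).add
      (isBigO_refl _ ⊤)).const_mul_left 3⁻¹).congr_left fun k => by
        linear_combination 3⁻¹ * markoff k

theorem isBigO_div_of_lt (h : MarkoffApprox ξ y u v) {m n : ℕ} (hmn : m < n) (hn : 2 ≤ n) :
    (fun k => (y (k + m) / y (k + n) : ℝ)) =O[⊤] fun k => (y k : ℝ)⁻¹ := by
  obtain ⟨n, rfl⟩ := Nat.exists_eq_add_of_le' hn
  have hmul : (fun k => (y k * y (k + m) : ℝ)) =O[⊤] fun k => (y (k + (n + 2)) : ℝ) :=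
    ((h.isBigO_mono n.zero_le).mul (h.isBigO_mono (Nat.lt_succ_iff.mp hmn))).trans
      (h.isTheta_mul.2.comp_tendsto (k := (· + n)) tendsto_top)
  refine (hmul.mul (isBigO_refl (fun k => (y k : ℝ)⁻¹ * (y (k + (n + 2)) : ℝ)⁻¹) ⊤)).congr
    (fun k => ?_) fun k => ?_
  all_goals
    have := h.cast_ne_zero k
    have := h.cast_ne_zero (k + (n + 2))
    field_simp

theorem isTheta_fib (h : MarkoffApprox ξ y u v) (n : ℕ) :
    (fun k => (y (k + n) : ℝ)) =Θ[⊤]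
      fun k => (y k : ℝ) ^ (n + 1).fib * (y (k + 1) / y k) ^ n.fib := by
  induction n using Nat.twoStepInduction with
  | zero => simpa using isTheta_refl _ _
  | one => simpa [mul_div_cancel₀, h.cast_ne_zero] using isTheta_refl _ _
  | more n ih ih' =>
    have hmul : (fun k => (y (k + n + 2) : ℝ)) =Θ[⊤] fun k => (y (k + n) * y (k + n + 1) : ℝ) :=
      isTheta_comp_tendsto h.isTheta_mul (g := (· + n)) tendsto_top
    refine (hmul.trans (ih.mul ih')).trans_eventuallyEq (.of_eq <| funext fun k => ?_)
    simp only [Nat.fib_add_two, pow_add]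
    ring

/-- By `isTheta_fib` a monomial in the denominators is determined, up to constants, by its two
exponents in `y k` and `y (k + 1) / y k`, so an estimate between monomials is a comparison of
Fibonacci sums. -/
theorem isBigO_prod_div_prod (h : MarkoffApprox ξ y u v) {N : ℕ} (p q : Fin N → ℕ)
    (hfib : ∑ i, p i * (i : ℕ).fib ≤ ∑ i, q i * (i : ℕ).fib)
    (hfib' : ∑ i, p i * (i + 1 : ℕ).fib < ∑ i, q i * (i + 1 : ℕ).fib) :
    (fun k => (∏ i : Fin N, (y (k + i) : ℝ) ^ p i) / ∏ i : Fin N, (y (k + i) : ℝ) ^ q i) =O[⊤]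
      fun k => (y k : ℝ)⁻¹ := by
  have hprod (p : Fin N → ℕ) : (fun k => ∏ i : Fin N, (y (k + i) : ℝ) ^ p i) =Θ[⊤] fun k =>
      (y k : ℝ) ^ (∑ i, p i * (i + 1 : ℕ).fib) * (y (k + 1) / y k) ^ (∑ i, p i * (i : ℕ).fib) := by
    refine (IsTheta.finsetProd fun (i : Fin N) _ => (h.isTheta_fib i).pow (p i)).trans_eventuallyEq
      (.of_eq <| funext fun k => ?_)
    simp only [mul_pow, Finset.prod_mul_distrib, ← pow_mul, Finset.prod_pow_eq_pow_sum, mul_comm]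
  have hratio : (fun k => (y k / y (k + 1) : ℝ)) =O[⊤] fun _ => (1 : ℝ) := by
    simpa [div_eq_mul_inv, (h.shift 1).cast_ne_zero] using
      h.isBigO_succ.mul (isBigO_refl (fun k => (y (k + 1) : ℝ)⁻¹) ⊤)
  obtain ⟨m, hm⟩ := Nat.exists_eq_add_of_le hfib
  obtain ⟨n, hn⟩ := Nat.exists_eq_add_of_lt hfib'
  have hbdd : (fun k => (y k : ℝ)⁻¹ * ((y k : ℝ)⁻¹ ^ n * (y k / y (k + 1)) ^ m)) =O[⊤]
      fun k => (y k : ℝ)⁻¹ := by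
    simpa only [one_pow, mul_one] using (isBigO_refl (fun k => (y k : ℝ)⁻¹) ⊤).mul
      ((h.isBigO_inv_one.pow n).mul (hratio.pow m))
  refine (((hprod p).div (hprod q)).1.congr_right fun k => ?_).trans hbdd
  have := h.cast_ne_zero k
  have := h.cast_ne_zero (k + 1)
  simp only [hm, hn, pow_add, pow_one, div_pow, inv_pow]
  field_simp

end Growth

section ErrorTerms

theorem approxErr_mul_sub (h : MarkoffApprox ξ y u v) (k : ℕ) :
    approxErr ξ y u (k + 1) * y (k + 2) - approxErr ξ y u (k + 2) * y (k + 1) =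
      (-1) ^ (k + 1) * y k := by
  have := congrArg (Int.cast : ℤ → ℝ) (h.cross k)
  push_cast at this
  rw [approxErr, approxErr, ← this]
  ring

theorem isBigO_approxErr_mul (h : MarkoffApprox ξ y u v) (j : ℕ) {f : ℕ → ℝ}
    (hf : (fun k => f k / y (k + j)) =O[⊤] fun k => (y k : ℝ)⁻¹) :
    (fun k => approxErr ξ y u (k + j) * f k) =O[⊤] fun k => (y k : ℝ)⁻¹ := by
  have herr : (fun k => approxErr ξ y u (k + j)) =O[⊤] fun k => (y (k + j) : ℝ)⁻¹ :=
    (h.shift j).isBigO_err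
  exact ((herr.mul (isBigO_refl f ⊤)).congr_right fun k => by ring).trans hf

theorem isBigO_div_sub (h : MarkoffApprox ξ y u v) :
    (fun k => y (k + 2) / y (k + 1) - 3 * y k : ℕ → ℝ) =O[⊤] fun k => (y k : ℝ)⁻¹ := by
  have h₁ : (fun k => (y (k + 1) / y (k + 2) : ℝ)) =O[⊤] fun k => (y k : ℝ)⁻¹ :=
    h.isBigO_div_of_lt (by decide) (by decide)
  have h₀ : (fun k => (y k ^ 2 / (y (k + 1) * y (k + 2)) : ℝ)) =O[⊤] fun k => (y k : ℝ)⁻¹ := by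
    simpa [Fin.prod_univ_succ] using
      h.isBigO_prod_div_prod ![2, 0, 0] ![0, 1, 1] (by decide) (by decide)
  refine (h₁.add h₀).neg_left.congr_left fun k => ?_
  have := h.cast_ne_zero (k + 1)
  have := h.cast_ne_zero (k + 2)
  field_simp
  linear_combination -h.markoff_cast k

theorem isBigO_sq_div_sub (h : MarkoffApprox ξ y u v) :
    (fun k => y (k + 2) ^ 2 / y (k + 3) - y k : ℕ → ℝ) =O[⊤] fun k => (y k : ℝ)⁻¹ := by
  have h₁ : (fun k => (y (k + 1) ^ 2 / y (k + 3) : ℝ)) =O[⊤] fun k => (y k : ℝ)⁻¹ := by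
    simpa [Fin.prod_univ_succ] using
      h.isBigO_prod_div_prod ![0, 2, 0, 0] ![0, 0, 0, 1] (by decide) (by decide)
  refine h₁.neg_left.congr_left fun k => ?_
  have := h.cast_ne_zero (k + 3)
  field_simp
  linear_combination y k * h.add_eq_cast k - h.markoff_cast k

theorem isBigO_approxErr_mul_sub (h : MarkoffApprox ξ y u v) :
    (fun k => approxErr ξ y u (k + 1) * y (k + 2) - (-1) ^ (k + 1) * y k) =O[⊤]
      fun k => (y k : ℝ)⁻¹ := by
  have h₂ : (fun k => (y (k + 1) / y (k + 2) : ℝ)) =O[⊤] fun k => (y k : ℝ)⁻¹ :=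
    h.isBigO_div_of_lt (by decide) (by decide)
  refine (h.isBigO_approxErr_mul 2 h₂).congr_left fun k => ?_
  linear_combination -h.approxErr_mul_sub k

theorem isBigO_approxErr_mul_mul_sub (h : MarkoffApprox ξ y u v) :
    (fun k => 3 * (approxErr ξ y u (k + 2) * y (k + 2) * y (k + 1)) - (-1) ^ k * y (k + 1))
      =O[⊤] fun k => (y k : ℝ)⁻¹ := by
  have h₃ : (fun k => (y (k + 2) / y (k + 3) : ℝ)) =O[⊤] fun k => (y k : ℝ)⁻¹ :=
    h.isBigO_div_of_lt (by decide) (by decide)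
  have h₂ : (fun k => (y k / y (k + 2) : ℝ)) =O[⊤] fun k => (y k : ℝ)⁻¹ :=
    h.isBigO_div_of_lt (m := 0) (by decide) (by decide)
  refine ((h.isBigO_approxErr_mul 3 h₃).add (h.isBigO_approxErr_mul 2 h₂)).congr_left fun k => ?_
  have := h.approxErr_mul_sub (k + 1)
  simp only [add_assoc, Nat.reduceAdd] at this
  linear_combination approxErr ξ y u (k + 2) * h.add_eq_cast k - this

theorem isBigO_approxErr_mul_sq_sub (h : MarkoffApprox ξ y u v) :
    (fun k => 3 * (approxErr ξ y u (k + 3) * y (k + 2) ^ 2) + (-1) ^ k * y k)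
      =O[⊤] fun k => (y k : ℝ)⁻¹ := by
  have h₄ : (fun k => (y (k + 2) / y (k + 4) : ℝ)) =O[⊤] fun k => (y k : ℝ)⁻¹ :=
    h.isBigO_div_of_lt (by decide) (by decide)
  have h₃ : (fun k => (y (k + 1) * y (k + 2) / y (k + 3) / y (k + 3) : ℝ)) =O[⊤]
      fun k => (y k : ℝ)⁻¹ := by
    simpa [Fin.prod_univ_succ, div_div, ← sq] using
      h.isBigO_prod_div_prod ![0, 1, 1, 0] ![0, 0, 0, 2] (by decide) (by decide)
  have hsq := isBigO_neg_one_pow_mul (· + 1) h.isBigO_sq_div_sub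
  refine (((h.isBigO_approxErr_mul 4 h₄).add (h.isBigO_approxErr_mul 3 h₃)).add hsq).congr_left
    fun k => ?_
  have := h.cast_ne_zero (k + 3)
  have add_eq := h.add_eq_cast (k + 1)
  have := h.approxErr_mul_sub (k + 2)
  simp only [add_assoc, Nat.reduceAdd] at this add_eq
  field_simp
  linear_combination approxErr ξ y u (k + 3) * y (k + 2) * add_eq - y (k + 2) * this

theorem isBigO_sq_err_mul_sq_div_sub (h : MarkoffApprox ξ y u v) :
    (fun k => (1 + approxErr ξ y u (k + 3) ^ 2) * (y (k + 4) ^ 2 / y (k + 3))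
      - (3 * (y (k + 2) * y (k + 4)) - y (k + 3))) =O[⊤] fun k => (y k : ℝ)⁻¹ := by
  have h₂ : (fun k => (y (k + 2) / y (k + 4) : ℝ)) =O[⊤] fun k => (y k : ℝ)⁻¹ :=
    h.isBigO_div_of_lt (by decide) (by decide)
  have h₃ : (fun k => (y (k + 3) / y (k + 4) : ℝ)) =O[⊤] fun k => (y k : ℝ)⁻¹ :=
    h.isBigO_div_of_lt (by decide) (by decide)
  have herr : (fun k => approxErr ξ y u (k + 4)) =O[⊤] fun _ => (1 : ℝ) :=
    (h.shift 4).isBigO_err_one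
  have hsq : (fun k => approxErr ξ y u (k + 4) * (approxErr ξ y u (k + 4) * y (k + 3))) =O[⊤]
      fun k => (y k : ℝ)⁻¹ := by
    simpa only [one_mul] using herr.mul (h.isBigO_approxErr_mul 4 h₃)
  refine (hsq.sub ((isBigO_neg_one_pow_mul id
    (h.isBigO_approxErr_mul 4 h₂)).const_mul_left 2)).congr_left fun k => ?_
  have hne := h.cast_ne_zero (k + 3)
  have hpow : ((-1 : ℝ) ^ k) ^ 2 = 1 := by rw [pow_right_comm, neg_one_sq, one_pow]
  have hcross := h.approxErr_mul_sub (k + 2)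
  have markoff := h.markoff_cast (k + 2)
  simp only [add_assoc, Nat.reduceAdd] at hcross markoff
  have hsq : (approxErr ξ y u (k + 3) * y (k + 4)) ^ 2 =
      (approxErr ξ y u (k + 4) * y (k + 3) - (-1) ^ k * y (k + 2)) ^ 2 := by
    congr 1
    linear_combination hcross
  field_simp
  simp only [id]
  linear_combination -markoff - hsq - y (k + 2) ^ 2 * hpow

end ErrorTerms

section Congruences

theorem shift_mem_nearInt (h : MarkoffApprox ξ y u v) {f : ℕ → ℝ}
    (hf : f ∈ nearInt ⊤ fun k => (y k : ℝ)⁻¹) (j : ℕ) :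
    (fun k => f (k + j)) ∈ nearInt ⊤ fun k => (y k : ℝ)⁻¹ :=
  comp_mem_nearInt (w := fun k => (y k : ℝ)⁻¹) (g := (· + j)) tendsto_top (h.isBigO_inv_shift j) hf

theorem mul_pow_mem_nearInt (h : MarkoffApprox ξ y u v) {j : ℕ} (hj : j ≤ 2) :
    (fun k => y k * ξ ^ j) ∈ nearInt ⊤ fun k => (y k : ℝ)⁻¹ := by
  interval_cases j
  · simpa only [pow_zero, mul_one] using intCast_mem_nearInt y
  · exact mem_nearInt_of_eq_intCast_add u h.isBigO_err fun k => by rw [approxErr]; ring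
  · exact mem_nearInt_of_eq_intCast_add v h.isBigO_sqErr fun k => by rw [approxErr]; ring

theorem add_mul_cube_mem_nearInt (h : MarkoffApprox ξ y u v) :
    (fun k => (y (k + 3) + y k) * ξ ^ 3) ∈ nearInt ⊤ fun k => (y k : ℝ)⁻¹ := by
  have h₁ : (fun k => (y (k + 1) / y (k + 2) : ℝ)) =O[⊤] fun k => (y k : ℝ)⁻¹ :=
    h.isBigO_div_of_lt (by decide) (by decide)
  have h₂ : (fun k => (y (k + 2) / y (k + 1) ^ 3 : ℝ)) =O[⊤] fun k => (y k : ℝ)⁻¹ := by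
    simpa [Fin.prod_univ_succ] using
      h.isBigO_prod_div_prod ![0, 0, 1] ![0, 3, 0] (by decide) (by decide)
  have hcube := (h.shift 1).mul_cube_sub_mem_nearInt (h.shift 2) h₁ h₂
  have hdiv := mem_nearInt_of_isBigO (h.isBigO_div_sub.const_mul_left ξ)
  have hone := h.mul_pow_mem_nearInt one_le_two
  refine mem_nearInt_congr (nsmul_mem (add_mem (add_mem hcube hdiv) (nsmul_mem hone 3)) 3)
    fun k => ?_
  simp only [Pi.add_apply, nsmul_eq_mul, Nat.cast_ofNat, Pi.mul_apply, Pi.ofNat_apply]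
  linear_combination ξ ^ 3 * h.add_eq_cast k

theorem mul_mul_cube_mem_nearInt (h : MarkoffApprox ξ y u v) :
    (fun k => y (k + 2) * y (k + 4) * ξ ^ 3) ∈ nearInt ⊤ fun k => (y k : ℝ)⁻¹ := by
  have h₂ : (fun k => (y (k + 2) / y (k + 4) : ℝ)) =O[⊤] fun k => (y k : ℝ)⁻¹ :=
    h.isBigO_div_of_lt (by decide) (by decide)
  have h₄ : (fun k => (y (k + 4) / y (k + 2) ^ 3 : ℝ)) =O[⊤] fun k => (y k : ℝ)⁻¹ := by
    simpa [Fin.prod_univ_succ] using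
      h.isBigO_prod_div_prod ![0, 0, 0, 0, 1] ![0, 0, 3, 0, 0] (by decide) (by decide)
  have h₁ : (fun k => (y (k + 1) / y (k + 2) : ℝ)) =O[⊤] fun k => (y k : ℝ)⁻¹ :=
    h.isBigO_div_of_lt (by decide) (by decide)
  have hcube := (h.shift 2).mul_cube_sub_mem_nearInt (h.shift 4) h₂ h₄
  have hdiv := mem_nearInt_of_isBigO (h₁.const_mul_left ξ)
  have hone := h.shift_mem_nearInt (h.mul_pow_mem_nearInt one_le_two) 3
  refine mem_nearInt_congr (sub_mem (add_mem hcube (nsmul_mem hone 3)) hdiv) fun k => ?_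
  have := h.cast_ne_zero (k + 2)
  have add_eq := h.add_eq_cast (k + 1)
  simp only [add_assoc, Nat.reduceAdd] at add_eq
  simp only [Pi.add_apply, Pi.sub_apply, nsmul_eq_mul, Nat.cast_ofNat, Pi.mul_apply, Pi.ofNat_apply]
  field_simp
  linear_combination ξ * add_eq

theorem add_mul_fourth_sub_mem_nearInt (h : MarkoffApprox ξ y u v) :
    (fun k => (y (k + 3) + y k) * ξ ^ 4 - 6 * ((-1) ^ (k + 1) * (y k * ξ ^ 3))) ∈
      nearInt ⊤ fun k => (y k : ℝ)⁻¹ := by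
  have h₁ : (fun k => (y (k + 1) / y (k + 2) : ℝ)) =O[⊤] fun k => (y k : ℝ)⁻¹ :=
    h.isBigO_div_of_lt (by decide) (by decide)
  have h₂ : (fun k => (y (k + 2) / y (k + 1) ^ 3 : ℝ)) =O[⊤] fun k => (y k : ℝ)⁻¹ := by
    simpa [Fin.prod_univ_succ] using
      h.isBigO_prod_div_prod ![0, 0, 1] ![0, 3, 0] (by decide) (by decide)
  have hfourth := (h.shift 1).mul_fourth_sub_mem_nearInt (h.shift 2) h₁ h₂
  have herr := mem_nearInt_of_isBigO (h.isBigO_approxErr_mul_sub.const_mul_left (2 * ξ ^ 3))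
  have hdiv := mem_nearInt_of_isBigO (h.isBigO_div_sub.const_mul_left (ξ ^ 2))
  have htwo := h.mul_pow_mem_nearInt le_rfl
  refine mem_nearInt_congr
    (nsmul_mem (sub_mem (sub_mem (add_mem hfourth herr) hdiv) (nsmul_mem htwo 3)) 3) fun k => ?_
  simp only [Pi.add_apply, Pi.sub_apply, nsmul_eq_mul, Nat.cast_ofNat, Pi.mul_apply, Pi.ofNat_apply,
    approxErr]
  linear_combination ξ ^ 4 * h.add_eq_cast k

theorem mul_sq_succ_mul_fifth_sub_mem_nearInt (h : MarkoffApprox ξ y u v) :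
    (fun k => 3 * (y (k + 3) * y (k + 4) ^ 2) * ξ ^ 5
      - (5 * ((-1) ^ k * (y (k + 3) * ξ ^ 4)) - 12 * (y (k + 3) * ξ ^ 3))) ∈
      nearInt ⊤ fun k => (y k : ℝ)⁻¹ := by
  have h₃ : (fun k => (y (k + 3) / y (k + 4) ^ 2 : ℝ)) =O[⊤] fun k => (y k : ℝ)⁻¹ := by
    simpa [Fin.prod_univ_succ] using
      h.isBigO_prod_div_prod ![0, 0, 0, 1, 0] ![0, 0, 0, 0, 2] (by decide) (by decide)
  have hfifth := (h.shift 3).mul_sq_fifth_sub_mem_nearInt 2 (h.shift 4) (h.isBigO_inv_shift 3) h₃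
  have hsq := mem_nearInt_of_isBigO (h.isBigO_sq_err_mul_sq_div_sub.const_mul_left (ξ ^ 3))
  have herr := h.shift_mem_nearInt
    (mem_nearInt_of_isBigO (h.isBigO_approxErr_mul_mul_sub.const_mul_left (ξ ^ 4))) 2
  refine mem_nearInt_congr (add_mem (add_mem (nsmul_mem (add_mem hfifth hsq) 3)
    (nsmul_mem herr 5)) (nsmul_mem h.mul_mul_cube_mem_nearInt 9)) fun k => ?_
  simp only [Pi.add_apply, nsmul_eq_mul, Nat.cast_ofNat, Pi.mul_apply, Pi.ofNat_apply,
    approxErr, add_assoc, Nat.reduceAdd]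
  ring

theorem mul_sq_pred_mul_fifth_sub_mem_nearInt (h : MarkoffApprox ξ y u v) :
    (fun k => 3 * (y (k + 3) * y (k + 2) ^ 2) * ξ ^ 5
      - (5 * ((-1) ^ (k + 1) * (y k * ξ ^ 4)) - 12 * (y k * ξ ^ 3) + 6 * (y (k + 3) * ξ ^ 3))) ∈
      nearInt ⊤ fun k => (y k : ℝ)⁻¹ := by
  have h₃ : (fun k => (y (k + 3) / y (k + 2) ^ 2 : ℝ)) =O[⊤] fun k => (y k : ℝ)⁻¹ := by
    simpa [Fin.prod_univ_succ] using
      h.isBigO_prod_div_prod ![0, 0, 0, 1] ![0, 0, 2, 0] (by decide) (by decide)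
  have hq : (fun k => (y (k + 2) ^ 2 / y (k + 3) / y (k + 3) : ℝ)) =O[⊤] fun k => (y k : ℝ)⁻¹ := by
    simpa [Fin.prod_univ_succ, div_div, ← sq] using
      h.isBigO_prod_div_prod ![0, 0, 2, 0] ![0, 0, 0, 2] (by decide) (by decide)
  have hone : (fun k => approxErr ξ y u (k + 3)) =O[⊤] fun _ => (1 : ℝ) :=
    (h.shift 3).isBigO_err_one
  have herr : (fun k => approxErr ξ y u (k + 3) * (approxErr ξ y u (k + 3) *
      (y (k + 2) ^ 2 / y (k + 3)))) =O[⊤] fun k => (y k : ℝ)⁻¹ := by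
    simpa only [one_mul] using hone.mul (h.isBigO_approxErr_mul 3 hq)
  have hfifth := (h.shift 3).mul_sq_fifth_sub_mem_nearInt (-3) (h.shift 2)
    (h.isBigO_inv_shift 3) h₃
  have hmain := mem_nearInt_of_isBigO (h.isBigO_approxErr_mul_sq_sub.const_mul_left (5 * ξ ^ 4))
  have hsq := mem_nearInt_of_isBigO
    ((h.isBigO_sq_div_sub.add herr).const_mul_left (12 * ξ ^ 3))
  refine mem_nearInt_congr (sub_mem (add_mem (nsmul_mem hfifth 3) hmain) hsq) fun k => ?_
  simp only [Pi.add_apply, Pi.sub_apply, nsmul_eq_mul, Nat.cast_ofNat, Pi.mul_apply,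
    Pi.ofNat_apply, approxErr]
  push_cast
  ring

theorem add_mul_pow_mem_nearInt (h : MarkoffApprox ξ y u v) {j : ℕ} (hj : j ≤ 3) :
    (fun k => (y (k + 3) + y k) * ξ ^ j) ∈ nearInt ⊤ fun k => (y k : ℝ)⁻¹ := by
  obtain rfl | hj := hj.eq_or_lt
  · exact h.add_mul_cube_mem_nearInt
  · have hpow := h.mul_pow_mem_nearInt (Nat.lt_succ_iff.mp hj)
    exact mem_nearInt_congr (add_mem (h.shift_mem_nearInt hpow 3) hpow) fun k => add_mul _ _ _

theorem sub_mul_fourth_mem_nearInt (h : MarkoffApprox ξ y u v) :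
    (fun k => (y (k + 6) - y k) * ξ ^ 4) ∈ nearInt ⊤ fun k => (y k : ℝ)⁻¹ := by
  have hfourth := h.add_mul_fourth_sub_mem_nearInt
  have hcube := neg_one_pow_mul_mem_nearInt id h.add_mul_cube_mem_nearInt
  refine mem_nearInt_congr (add_mem (sub_mem (h.shift_mem_nearInt hfourth 3) hfourth)
    (nsmul_mem hcube 6)) fun k => ?_
  simp only [Pi.add_apply, Pi.sub_apply, nsmul_eq_mul, Nat.cast_ofNat, Pi.mul_apply,
    Pi.ofNat_apply, add_assoc, Nat.reduceAdd, id]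
  ring

theorem sub_eq_mul_sub (h : MarkoffApprox ξ y u v) (k : ℕ) :
    (y (k + 6) - y k : ℝ) = 9 * y (k + 3) * (y (k + 4) ^ 2 - y (k + 2) ^ 2) := by
  have h₀ := h.add_eq_cast k
  have h₁ := h.add_eq_cast (k + 1)
  have h₂ := h.add_eq_cast (k + 2)
  have h₃ := h.add_eq_cast (k + 3)
  simp only [add_assoc, Nat.reduceAdd] at h₁ h₂ h₃
  linear_combination h₃ - h₀ + 3 * y (k + 4) * h₂ - 3 * y (k + 2) * h₁

theorem sub_mul_fifth_mem_nearInt (h : MarkoffApprox ξ y u v) :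
    (fun k => (y (k + 6) - y k) * ξ ^ 5) ∈ nearInt ⊤ fun k => (y k : ℝ)⁻¹ := by
  have hfifth := sub_mem h.mul_sq_succ_mul_fifth_sub_mem_nearInt
    h.mul_sq_pred_mul_fifth_sub_mem_nearInt
  have hfourth := neg_one_pow_mul_mem_nearInt id h.add_mul_fourth_sub_mem_nearInt
  refine mem_nearInt_congr (sub_mem (nsmul_mem (add_mem hfifth (nsmul_mem hfourth 5)) 3)
    (nsmul_mem h.add_mul_cube_mem_nearInt 54)) fun k => ?_
  simp only [Pi.add_apply, Pi.sub_apply, nsmul_eq_mul, Nat.cast_ofNat, Pi.mul_apply,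
    Pi.ofNat_apply, id]
  have hpow : ((-1 : ℝ) ^ k) ^ 2 = 1 := by rw [pow_right_comm, neg_one_sq, one_pow]
  linear_combination ξ ^ 5 * h.sub_eq_mul_sub k - 90 * y k * ξ ^ 3 * hpow

theorem sub_mul_pow_mem_nearInt (h : MarkoffApprox ξ y u v) {j : ℕ} (hj : j ≤ 5) :
    (fun k => (y (k + 6) - y k) * ξ ^ j) ∈ nearInt ⊤ fun k => (y k : ℝ)⁻¹ := by
  obtain hj | rfl | rfl : j ≤ 3 ∨ j = 4 ∨ j = 5 := by lia
  · have hadd := h.add_mul_pow_mem_nearInt hj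
    refine mem_nearInt_congr (sub_mem (h.shift_mem_nearInt hadd 3) hadd) fun k => ?_
    simp only [Pi.sub_apply, add_assoc, Nat.reduceAdd]
    ring
  · exact h.sub_mul_fourth_mem_nearInt
  · exact h.sub_mul_fifth_mem_nearInt

end Congruences

end MarkoffApprox

/-! ### The matrices `x k` -/

theorem mul_self_fin_two {R : Type*} [CommRing R] (A : Matrix (Fin 2) (Fin 2) R) :
    A * A = A.trace • A - A.det • (1 : Matrix (Fin 2) (Fin 2) R) := by
  nontriviality R
  have h := A.aeval_self_charpoly
  simp only [Matrix.charpoly_fin_two, map_add, map_sub, map_mul, map_pow, aeval_X, aeval_C,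
    Algebra.algebraMap_eq_smul_one, smul_mul_assoc, one_mul] at h
  rw [← sub_eq_zero, ← h, sq]
  abel

namespace MarkoffSeq

variable {ξ : ℝ} {x : ℕ → Matrix (Fin 2) (Fin 2) ℤ}

section Matrices

open Matrix

theorem apply_one_zero (hx : MarkoffSeq ξ x) (k : ℕ) : x (k + 1) 1 0 = x (k + 1) 0 1 :=
  (hx.1 (k + 1) k.succ_pos).symm

theorem det_eq_one (hx : MarkoffSeq ξ x) (k : ℕ) : (x (k + 1)).det = 1 :=
  hx.2.1 (k + 1) k.succ_pos

theorem mul_sub_sq_eq_one (hx : MarkoffSeq ξ x) (k : ℕ) :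
    x (k + 1) 0 0 * x (k + 1) 1 1 - x (k + 1) 0 1 ^ 2 = 1 := by
  rw [← hx.det_eq_one k, det_fin_two, hx.apply_one_zero, sq]

theorem eq_mul_mul (hx : MarkoffSeq ξ x) (k : ℕ) :
    x (k + 3) = x (k + 2) * Mmat (k + 2) * x (k + 1) := by
  obtain ⟨-, -, _, _, _, -, -, -, h⟩ := hx
  exact (h (k + 1) k.succ_pos).2.2.1.1

theorem eq_mul_mul' (hx : MarkoffSeq ξ x) (k : ℕ) :
    x (k + 3) = x (k + 1) * Mmat (k + 1) * x (k + 2) := by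
  obtain ⟨-, -, _, _, _, -, -, -, h⟩ := hx
  exact (h (k + 1) k.succ_pos).2.2.1.2

theorem add_eq (hx : MarkoffSeq ξ x) (k : ℕ) :
    x (k + 4) + x (k + 1) = (3 * x (k + 2) 0 0) • x (k + 3) := by
  have det_mul_eq : (x (k + 2) * Mmat (k + 2)).det = 1 := by
    rw [det_mul, hx.det_eq_one]
    simp [Mmat, det_fin_two, pow_succ, ← mul_pow]
  have trace_mul_eq : (x (k + 2) * Mmat (k + 2)).trace = 3 * x (k + 2) 0 0 := by
    rw [eta_fin_two (x (k + 2)), hx.apply_one_zero (k + 1), Mmat, mul_fin_two, trace_fin_two_of]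
    simp only [cons_val', cons_val_zero, pow_succ, of_apply]
    ring
  calc x (k + 4) + x (k + 1)
      = x (k + 2) * Mmat (k + 2) * (x (k + 2) * Mmat (k + 2)) * x (k + 1) + x (k + 1) := by
        rw [hx.eq_mul_mul' (k + 1), hx.eq_mul_mul k, ← mul_assoc]
    _ = (3 * x (k + 2) 0 0) • x (k + 3) := by
        rw [mul_self_fin_two, det_mul_eq, trace_mul_eq, hx.eq_mul_mul k, sub_mul, one_smul,
          one_mul, smul_mul, sub_add_cancel]

theorem zero_zero_eq (hx : MarkoffSeq ξ x) (k : ℕ) : x (k + 3) 0 0 =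
    3 * x (k + 1) 0 0 * x (k + 2) 0 0 +
      (-1) ^ (k + 1) * (x (k + 1) 0 0 * x (k + 2) 0 1 - x (k + 1) 0 1 * x (k + 2) 0 0) := by
  rw [hx.eq_mul_mul' k, eta_fin_two (x (k + 1)), eta_fin_two (x (k + 2)), hx.apply_one_zero k,
    hx.apply_one_zero (k + 1), Mmat, mul_fin_two, mul_fin_two]
  simp only [cons_val', cons_val_zero, cons_val_one, of_apply, pow_succ]
  ring

theorem three_mul_cross_add_eq_zero (hx : MarkoffSeq ξ x) (k : ℕ) :
    3 * (x (k + 1) 0 0 * x (k + 2) 0 1 - x (k + 1) 0 1 * x (k + 2) 0 0) +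
      (-1) ^ (k + 1) * (x (k + 1) 0 0 * x (k + 2) 1 1 + x (k + 1) 1 1 * x (k + 2) 0 0
        - 2 * x (k + 1) 0 1 * x (k + 2) 0 1) = 0 := by
  have h := hx.apply_one_zero (k + 2)
  rw [hx.eq_mul_mul' k, eta_fin_two (x (k + 1)), eta_fin_two (x (k + 2)), hx.apply_one_zero k,
    hx.apply_one_zero (k + 1), Mmat, mul_fin_two, mul_fin_two] at h
  simp only [cons_val', cons_val_zero, cons_val_one, of_apply, pow_succ] at h
  linear_combination -h

theorem cross (hx : MarkoffSeq ξ x) (k : ℕ) :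
    x (k + 2) 0 0 * x (k + 3) 0 1 - x (k + 2) 0 1 * x (k + 3) 0 0 =
      (-1) ^ (k + 1) * x (k + 1) 0 0 := by
  have h := hx.zero_zero_eq (k + 1)
  have hadd : x (k + 4) 0 0 + x (k + 1) 0 0 = 3 * x (k + 2) 0 0 * x (k + 3) 0 0 :=
    congrFun₂ (hx.add_eq k) 0 0
  have hpow : ((-1 : ℤ) ^ k) ^ 2 = 1 := by rw [pow_right_comm, neg_one_sq, one_pow]
  simp only [add_assoc, Nat.reduceAdd, pow_add] at h ⊢
  linear_combination (-1) ^ k * (hadd - h) - (x (k + 2) 0 0 * x (k + 3) 0 1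
    - x (k + 2) 0 1 * x (k + 3) 0 0) * hpow

theorem markoff (hx : MarkoffSeq ξ x) (k : ℕ) :
    x (k + 1) 0 0 ^ 2 + x (k + 2) 0 0 ^ 2 + x (k + 3) 0 0 ^ 2 =
      3 * x (k + 1) 0 0 * x (k + 2) 0 0 * x (k + 3) 0 0 := by
  have hpow : ((-1 : ℤ) ^ (k + 1)) ^ 2 = 1 := by rw [pow_right_comm, neg_one_sq, one_pow]
  rw [hx.zero_zero_eq k]
  linear_combination (x (k + 1) 0 0 * x (k + 2) 0 1 - x (k + 1) 0 1 * x (k + 2) 0 0) ^ 2 * hpow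
    - x (k + 1) 0 0 ^ 2 * hx.mul_sub_sq_eq_one (k + 1) - x (k + 2) 0 0 ^ 2 * hx.mul_sub_sq_eq_one k
    + x (k + 1) 0 0 * x (k + 2) 0 0 * (-1) ^ (k + 1) * hx.three_mul_cross_add_eq_zero k
    - x (k + 1) 0 0 * x (k + 2) 0 0 * (x (k + 1) 0 0 * x (k + 2) 1 1
      + x (k + 1) 1 1 * x (k + 2) 0 0 - 2 * x (k + 1) 0 1 * x (k + 2) 0 1) * hpow

end Matrices

section Estimates

theorem Xnorm_strictMono (hx : MarkoffSeq ξ x) : StrictMono fun k => Xnorm x (k + 1) := by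
  obtain ⟨-, -, _, _, _, -, -, -, h⟩ := hx
  exact strictMono_nat_of_lt_succ fun k => (h (k + 1) k.succ_pos).2.2.2.1

theorem Xnorm_lt_mul_abs (hx : MarkoffSeq ξ x) (k : ℕ) :
    Xnorm x (k + 1) < (1 + ξ ^ 2) * |(x (k + 1) 0 0 : ℝ)| := by
  obtain ⟨-, -, _, _, _, -, -, -, h⟩ := hx
  exact (h (k + 1) k.succ_pos).2.2.2.2

theorem abs_le_Xnorm (x : ℕ → Matrix (Fin 2) (Fin 2) ℤ) (k : ℕ) :
    |(x k 0 0 : ℝ)| ≤ Xnorm x k :=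
  le_max_left _ _

theorem zero_zero_ne_zero (hx : MarkoffSeq ξ x) (k : ℕ) : x (k + 1) 0 0 ≠ 0 := by
  intro h
  have hX := hx.Xnorm_lt_mul_abs k
  rw [h, Int.cast_zero, abs_zero, mul_zero] at hX
  exact hX.not_ge ((abs_nonneg _).trans (abs_le_Xnorm x _))

theorem isTheta_Xnorm (hx : MarkoffSeq ξ x) :
    (fun k => Xnorm x (k + 1)) =Θ[⊤] fun k => (x (k + 1) 0 0 : ℝ) := by
  have Xnorm_nonneg (k : ℕ) : 0 ≤ Xnorm x k := (abs_nonneg _).trans (abs_le_Xnorm x k)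
  refine ⟨.of_bound (1 + ξ ^ 2) (.of_forall fun k => ?_), isBigO_of_le _ fun k => ?_⟩
  · rw [Real.norm_of_nonneg (Xnorm_nonneg _), Real.norm_eq_abs]
    exact (hx.Xnorm_lt_mul_abs k).le
  · rw [Real.norm_of_nonneg (Xnorm_nonneg _), Real.norm_eq_abs]
    exact abs_le_Xnorm x _

theorem markoffApprox (hx : MarkoffSeq ξ x) :
    MarkoffApprox ξ (fun k => x (k + 1) 0 0) (fun k => x (k + 1) 0 1) fun k => x (k + 1) 1 1 where
  det_eq := hx.mul_sub_sq_eq_one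
  ne_zero := hx.zero_zero_ne_zero
  add_eq k := congrFun₂ (hx.add_eq k) 0 0
  markoff := hx.markoff
  cross := hx.cross
  isBigO_succ := by
    have hX : (fun k => Xnorm x (k + 1)) =O[⊤] fun k => Xnorm x (k + 2) :=
      isBigO_of_le _ fun k => by
        have h₀ := (abs_nonneg _).trans (abs_le_Xnorm x (k + 1))
        have h₁ := hx.Xnorm_strictMono k.lt_succ_self
        rw [Real.norm_of_nonneg h₀, Real.norm_of_nonneg (h₀.trans h₁.le)]
        exact h₁.le
    exact (hx.isTheta_Xnorm.2.trans hX).trans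
      (hx.isTheta_Xnorm.1.comp_tendsto (k := (· + 1)) tendsto_top)
  isBigO_err := by
    refine IsBigO.trans (g := fun k => (Xnorm x (k + 1))⁻¹) ?_
      (hx.isTheta_Xnorm.2.inv_rev (by simp [hx.zero_zero_ne_zero]))
    obtain ⟨-, -, _, _, c, -, -, -, h⟩ := hx
    refine .of_bound c (.of_forall fun k => ?_)
    rw [norm_inv, Real.norm_of_nonneg ((abs_nonneg _).trans (abs_le_Xnorm x _)), ← div_eq_mul_inv]
    exact (h (k + 1) k.succ_pos).2.1.1

end Estimates

end MarkoffSeq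

/-! ### Summable errors -/

section Limits

theorem exists_tendsto_dist_le_tsum {α : Type*} [PseudoMetricSpace α] [CompleteSpace α]
    {f : ℕ → α} {d : ℕ → ℝ} (hf : ∀ n, dist (f n) (f (n + 1)) ≤ d n) (hd : Summable d) :
    ∃ a, Tendsto f atTop (nhds a) ∧ dist (f 0) a ≤ ∑' n, d n := by
  obtain ⟨a, ha⟩ := cauchySeq_tendsto_of_complete (cauchySeq_of_dist_le_of_summable d hf hd)
  exact ⟨a, ha, dist_le_tsum_of_dist_le_of_tendsto₀ d hf hd ha⟩

theorem summable_one_div_add_one_sq : Summable fun i : ℕ => 1 / ((i : ℝ) + 1) ^ 2 := by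
  simpa using (summable_nat_add_iff 1).mpr (Real.summable_one_div_nat_pow.mpr one_lt_two)

theorem exists_mul_sq_le_mul {X : ℕ → ℝ} {B : ℝ} (hX : ∀ k : ℕ, (k : ℝ) ≤ X k) (hmono : Monotone X)
    (hB : 0 ≤ B) (hmul : ∀ k, X k * X (k + 1) ≤ B * X (k + 2)) :
    ∃ C, 0 ≤ C ∧ ∀ k i : ℕ, X k * (i + 1) ^ 2 ≤ C * X (k + 6 * i) := by
  have hX₀ (k : ℕ) : 0 ≤ X k := k.cast_nonneg.trans (hX k)
  have hcast (k m : ℕ) : (m + 1 : ℝ) ≤ X (k + m + 1) :=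
    le_trans (by push_cast; linarith [(k.cast_nonneg : (0 : ℝ) ≤ k)]) (hX _)
  have hlinear (k m : ℕ) : X k * (m + 1) ≤ B * X (k + m + 2) :=
    (mul_le_mul (hmono (by lia)) (hcast k m) (by positivity) (hX₀ _)).trans (hmul _)
  have hquadratic (k m : ℕ) : X k * (m + 1) ^ 2 ≤ B ^ 2 * X (k + m + 4) :=
    calc X k * (m + 1) ^ 2 = X k * (m + 1) * (m + 1) := by ring
      _ ≤ B * X (k + m + 2) * X (k + m + 3) :=
        mul_le_mul (hlinear k m) ((hcast k m).trans (hmono (by lia))) (by positivity)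
          (mul_nonneg hB (hX₀ _))
      _ ≤ B ^ 2 * X (k + m + 4) := by
        rw [mul_assoc, sq, mul_assoc]
        exact mul_le_mul_of_nonneg_left (hmul (k + m + 2)) hB
  refine ⟨max 1 (B ^ 2), by positivity, fun k i => ?_⟩
  obtain _ | i := i
  · simpa using le_mul_of_one_le_left (hX₀ k) (le_max_left 1 (B ^ 2))
  · exact (hquadratic k (i + 1)).trans (mul_le_mul (le_max_right _ _) (hmono (by lia)) (hX₀ _)
      (by positivity))

end Limits

namespace MarkoffSeq

variable {ξ : ℝ} {x : ℕ → Matrix (Fin 2) (Fin 2) ℤ}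

theorem Xnorm_pos (hx : MarkoffSeq ξ x) (k : ℕ) : 0 < Xnorm x (k + 1) :=
  (abs_pos.mpr (mod_cast hx.zero_zero_ne_zero k)).trans_le (abs_le_Xnorm x _)

theorem natCast_le_Xnorm (hx : MarkoffSeq ξ x) (k : ℕ) : (k : ℝ) ≤ Xnorm x (k + 1) := by
  have cast_natAbs (n : ℤ) : |(n : ℝ)| = n.natAbs := by
    rw [← Int.cast_abs, Int.abs_eq_natAbs, Int.cast_natCast]
  let N (k : ℕ) : ℕ :=
    max (x (k + 1) 0 0).natAbs (max (x (k + 1) 0 1).natAbs (x (k + 1) 1 1).natAbs)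
  have Xnorm_eq (k : ℕ) : Xnorm x (k + 1) = N k := by
    simp only [Xnorm, N, cast_natAbs, Nat.cast_max]
  have hN : StrictMono N := fun i j hij => by
    exact_mod_cast (Xnorm_eq i).symm.trans_lt <| (hx.Xnorm_strictMono hij).trans_eq (Xnorm_eq j)
  rw [Xnorm_eq]
  exact_mod_cast hN.le_apply

theorem exists_Xnorm_mul_sq_le (hx : MarkoffSeq ξ x) :
    ∃ C, 0 ≤ C ∧ ∀ k i : ℕ, Xnorm x (k + 1) * (i + 1) ^ 2 ≤ C * Xnorm x (k + 6 * i + 1) := by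
  have hmul : (fun k => Xnorm x (k + 1) * Xnorm x (k + 2)) =O[⊤] fun k => Xnorm x (k + 3) := by
    have hΘ := hx.isTheta_Xnorm
    exact ((hΘ.1.mul (hΘ.1.comp_tendsto (k := (· + 1)) tendsto_top)).trans
      hx.markoffApprox.isTheta_mul.2).trans (hΘ.2.comp_tendsto (k := (· + 2)) tendsto_top)
  obtain ⟨B, hB, h⟩ := hmul.exists_nonneg
  refine exists_mul_sq_le_mul hx.natCast_le_Xnorm hx.Xnorm_strictMono.monotone hB fun k => ?_
  refine (le_abs_self _).trans ((isBigOWith_top.mp h k).trans_eq ?_)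
  rw [Real.norm_of_nonneg ((abs_nonneg _).trans (abs_le_Xnorm x _))]

theorem exists_distInt_mul_aeval_le_div_sq (hx : MarkoffSeq ξ x) {d : ℕ → ℝ} {N : ℕ}
    (hd : ∀ j ≤ N, (fun k => d k * ξ ^ j) ∈ nearInt ⊤ fun k => (x (k + 1) 0 0 : ℝ)⁻¹) :
    ∃ C, 0 ≤ C ∧ ∀ R : ℤ[X], R.natDegree ≤ N → ∀ k i : ℕ,
      distInt (d (k + 6 * i) * aeval ξ R) ≤
        C * polyNorm R / Xnorm x (k + 1) * (1 / (i + 1) ^ 2) := by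
  obtain ⟨C, hC, hle⟩ := exists_distInt_mul_aeval_le hd
  obtain ⟨C', hC', hX⟩ := hx.exists_Xnorm_mul_sq_le
  refine ⟨C * ((1 + ξ ^ 2) * C'), by positivity, fun R hR k i => (hle R hR _).trans ?_⟩
  have hinv : |(x (k + 6 * i + 1) 0 0 : ℝ)⁻¹| ≤ (1 + ξ ^ 2) / Xnorm x (k + 6 * i + 1) := by
    rw [abs_inv, inv_eq_one_div, div_le_div_iff₀ (abs_pos.mpr (mod_cast
      hx.zero_zero_ne_zero _)) (hx.Xnorm_pos _), one_mul]
    exact (hx.Xnorm_lt_mul_abs _).le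
  have hgrowth : 1 / Xnorm x (k + 6 * i + 1) ≤ C' / (Xnorm x (k + 1) * (i + 1) ^ 2) := by
    rw [div_le_div_iff₀ (hx.Xnorm_pos _) (mul_pos (hx.Xnorm_pos _) (by positivity)), one_mul]
    exact hX k i
  calc C * polyNorm R * |(x (k + 6 * i + 1) 0 0 : ℝ)⁻¹|
      ≤ C * polyNorm R * ((1 + ξ ^ 2) * (C' / (Xnorm x (k + 1) * (i + 1) ^ 2))) := by
        rw [← mul_one_div] at hinv
        gcongr
        exact hinv.trans (by gcongr)
    _ = C * ((1 + ξ ^ 2) * C') * polyNorm R / Xnorm x (k + 1) * (1 / (i + 1) ^ 2) := by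
        field_simp

theorem exists_tendsto_distInt (hx : MarkoffSeq ξ x) :
    ∃ c, 0 ≤ c ∧ ∀ R : ℤ[X], R.natDegree ≤ 5 → ∀ k, ∃ δ,
      Tendsto (fun i : ℕ => distInt (x (k + 1 + 6 * i) 0 0 * aeval ξ R)) atTop (nhds δ) ∧
        |δ - distInt (x (k + 1) 0 0 * aeval ξ R)| ≤ c * polyNorm R / Xnorm x (k + 1) := by
  obtain ⟨C, hC, hdist⟩ :=
    hx.exists_distInt_mul_aeval_le_div_sq fun j hj => hx.markoffApprox.sub_mul_pow_mem_nearInt hj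
  refine ⟨C * ∑' i : ℕ, 1 / ((i : ℝ) + 1) ^ 2, mul_nonneg hC (tsum_nonneg fun i => by positivity),
    fun R hR k => ?_⟩
  have hstep (i : ℕ) : dist (distInt (x (k + 1 + 6 * i) 0 0 * aeval ξ R))
      (distInt (x (k + 1 + 6 * (i + 1)) 0 0 * aeval ξ R)) ≤
        C * polyNorm R / Xnorm x (k + 1) * (1 / (i + 1) ^ 2) := by
    rw [dist_comm, show k + 1 + 6 * i = k + 6 * i + 1 by lia,
      show k + 1 + 6 * (i + 1) = k + 6 * i + 6 + 1 by lia]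
    exact (abs_distInt_sub_distInt_le_sub _ _).trans
      (by simpa only [sub_mul] using hdist R hR k i)
  obtain ⟨δ, hδ, hle⟩ :=
    exists_tendsto_dist_le_tsum hstep (summable_one_div_add_one_sq.mul_left _)
  refine ⟨δ, hδ, ?_⟩
  calc |δ - distInt (x (k + 1) 0 0 * aeval ξ R)|
      ≤ ∑' i : ℕ, C * polyNorm R / Xnorm x (k + 1) * (1 / (i + 1) ^ 2) := by
        simpa only [dist_comm, Real.dist_eq, mul_zero, add_zero] using hle
    _ = (C * ∑' i : ℕ, 1 / ((i : ℝ) + 1) ^ 2) * polyNorm R / Xnorm x (k + 1) := by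
        rw [tsum_mul_left]
        ring

theorem tendsto_distInt_add_three (hx : MarkoffSeq ξ x) {R : ℤ[X]} (hR : R.natDegree ≤ 3) {k : ℕ}
    {δ : ℝ}
    (hδ : Tendsto (fun i : ℕ => distInt (x (k + 1 + 6 * i) 0 0 * aeval ξ R)) atTop (nhds δ)) :
    Tendsto (fun i : ℕ => distInt (x (k + 1 + 3 + 6 * i) 0 0 * aeval ξ R)) atTop (nhds δ) := by
  obtain ⟨C, -, hdist⟩ :=
    hx.exists_distInt_mul_aeval_le_div_sq fun j hj => hx.markoffApprox.add_mul_pow_mem_nearInt hj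
  refine hδ.congr_dist (squeeze_zero (fun _ => dist_nonneg) (fun i => ?_)
    (summable_one_div_add_one_sq.mul_left (C * polyNorm R / Xnorm x (k + 1))).tendsto_atTop_zero)
  rw [dist_comm, show k + 1 + 6 * i = k + 6 * i + 1 by lia,
    show k + 1 + 3 + 6 * i = k + 6 * i + 3 + 1 by lia]
  exact (abs_distInt_sub_distInt_le_add _ _).trans (by simpa only [add_mul] using hdist R hR k i)

end MarkoffSeq

theorem stmt9 (ξ : ℝ) (x : ℕ → Matrix (Fin 2) (Fin 2) ℤ) (hx : MarkoffSeq ξ x) :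
    ∃ c : ℝ, 0 < c ∧ ∀ R : Polynomial ℤ, R.natDegree ≤ 5 → ∀ k, 1 ≤ k →
      ∃ δ : ℝ,
        Tendsto (fun i : ℕ =>
          distInt ((x (k+6*i) 0 0 : ℝ) * Polynomial.aeval ξ R)) atTop (nhds δ) ∧
        |δ - distInt ((x k 0 0 : ℝ) * Polynomial.aeval ξ R)|
          ≤ c * (polyNorm R : ℝ) / Xnorm x k ∧
        Tendsto (fun i : ℕ =>
          distInt ((x (k+6+6*i) 0 0 : ℝ) * Polynomial.aeval ξ R)) atTop (nhds δ) ∧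
        (R.natDegree ≤ 3 → Tendsto (fun i : ℕ =>
          distInt ((x (k+3+6*i) 0 0 : ℝ) * Polynomial.aeval ξ R)) atTop (nhds δ)) := by
  obtain ⟨c, hc, hlim⟩ := hx.exists_tendsto_distInt
  refine ⟨c + 1, by positivity, fun R hR k hk => ?_⟩
  obtain ⟨k, rfl⟩ := Nat.exists_eq_add_of_le' hk
  obtain ⟨δ, hδ, hle⟩ := hlim R hR k
  refine ⟨δ, hδ, ?_, ?_, fun hR₃ => hx.tendsto_distInt_add_three hR₃ hδ⟩
  · have := (hx.Xnorm_pos k).le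
    exact hle.trans (by gcongr; exact le_add_of_nonneg_right zero_le_one)
  · refine ((tendsto_add_atTop_iff_nat 1).mpr hδ).congr fun i => ?_
    rw [show k + 1 + 6 * (i + 1) = k + 1 + 6 + 6 * i by lia]
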